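/- arXiv:2011.05314 — 3 statements merged into one kernel-verified Lean document; each statement's English description precedes it below -/
import Mathlib

section
/- For every divergence tolerance ρ ≥ 0, the worst-case expected cost over the KL ambiguity set equals the value of the paper's dual reformulation: sup_{π ∈ P(ρ)} Σ_ω π_ω Q_ω = inf_{ζ > 0, μ ∈ ℝ} [ μ + ρζ + ζ · Σ_ω π°_ω · exp((Q_ω − μ)/ζ − 1) ]. -/
/-!
Tilt the reference weights exponentially, `pₜ ∝ w * exp (t * Q)`, where `1 / t` is the multiplier of
the divergence constraint. Writing `E t` and `K t` for the mean cost and the divergence of `pₜ`, the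
dual objective at `ζ = 1 / t` and the best `μ` is `E t + (ρ - K t) / t`. It coincides with
the cost of the feasible point `pₜ` when `K t = ρ`. By continuity such a `t ≥ 0` exists unless `K`
stays below `ρ`, and then `(ρ - K t) / t → 0` as `t → ∞`. The boundary solution `t = 0`, where `pₜ`
minimises the divergence, corresponds to `ζ = ∞` and is reached only in the limit `t → 0⁺`.
-/

lemma exists_isLUB_isGLB_of_forall_exists_le_add {A B : Set ℝ}
    (hle : ∀ a ∈ A, ∀ b ∈ B, a ≤ b)
    (hgap : ∀ ε > 0, ∃ a ∈ A, ∃ b ∈ B, b ≤ a + ε) :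
    ∃ v, IsLUB A v ∧ IsGLB B v := by
  obtain ⟨a₀, ha₀, b₀, hb₀, -⟩ := hgap 1 one_pos
  have hsup : IsLUB A (sSup A) := isLUB_csSup ⟨a₀, ha₀⟩ ⟨b₀, fun a ha => hle a ha b₀ hb₀⟩
  refine ⟨sSup A, hsup, fun b hb => hsup.2 fun a ha => hle a ha b hb, fun c hc => ?_⟩
  refine le_of_forall_pos_le_add fun ε hε => ?_
  obtain ⟨a, ha, b, hb, hba⟩ := hgap ε hε
  linarith [hc hb, hsup.1 ha]

/-- Young's inequality for the conjugate pair `s ↦ s * log s - s` and `exp`. -/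
lemma mul_add_one_le_mul_log_div_add_mul_exp {p q : ℝ} (hp : 0 ≤ p) (hq : 0 < q) (x : ℝ) :
    p * (x + 1) ≤ p * Real.log (p / q) + q * Real.exp x := by
  rcases hp.eq_or_lt with rfl | hp
  · simpa using (mul_pos hq (Real.exp_pos x)).le
  · calc p * (x + 1)
        = p * Real.log (p / q) + p * (x - Real.log (p / q) + 1) := by ring
      _ ≤ p * Real.log (p / q) + p * Real.exp (x - Real.log (p / q)) := by
          gcongr; exact Real.add_one_le_exp _
      _ = p * Real.log (p / q) + q * Real.exp x := by
          rw [Real.exp_sub, Real.exp_log (by positivity)]; field_simp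

section

variable {ι : Type*} [Fintype ι] {p w Q : ι → ℝ} {ρ ζ : ℝ}

/-- The Kullback–Leibler divergence of `p` from reference weights `w`, which need not have total
mass one. The convention `0 * log 0 = 0` is automatic; the formula is meaningful for `w > 0` only,
because of `x / 0 = 0`. -/
noncomputable def relEntropy (p w : ι → ℝ) : ℝ :=
  ∑ i, p i * Real.log (p i / w i)

/-- The objective of the dual problem, in the multiplier `ζ` of the divergence constraint and the
multiplier `μ` of the normalisation constraint. -/
noncomputable def klDualObjective (w Q : ι → ℝ) (ρ ζ μ : ℝ) : ℝ :=
  μ + ρ * ζ + ζ * ∑ i, w i * Real.exp ((Q i - μ) / ζ - 1)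

lemma sum_mul_add_sum_le_relEntropy_add_sum_mul_exp (hp : ∀ i, 0 ≤ p i) (hw : ∀ i, 0 < w i)
    (x : ι → ℝ) :
    ∑ i, p i * x i + ∑ i, p i ≤ relEntropy p w + ∑ i, w i * Real.exp (x i) := by
  simp only [relEntropy, ← Finset.sum_add_distrib]
  refine Finset.sum_le_sum fun i _ => ?_
  linarith [mul_add_one_le_mul_log_div_add_mul_exp (hp i) (hw i) (x i)]

lemma sum_mul_le_klDualObjective (hp : p ∈ stdSimplex ℝ ι) (hw : ∀ i, 0 < w i)
    (hρ : relEntropy p w ≤ ρ) (hζ : 0 < ζ) (μ : ℝ) :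
    ∑ i, p i * Q i ≤ klDualObjective w Q ρ ζ μ := by
  have young := sum_mul_add_sum_le_relEntropy_add_sum_mul_exp hp.1 hw fun i => (Q i - μ) / ζ - 1
  have hsum : ∑ i, p i * ((Q i - μ) / ζ - 1) = (∑ i, p i * Q i - μ) / ζ - 1 := by
    simp only [mul_sub, ← mul_div_assoc, mul_one, Finset.sum_sub_distrib, ← Finset.sum_div,
      ← Finset.sum_mul, hp.2, one_mul]
  rw [hsum, hp.2, sub_add_cancel, div_le_iff₀ hζ] at young
  calc ∑ i, p i * Q i
      ≤ μ + (relEntropy p w + ∑ i, w i * Real.exp ((Q i - μ) / ζ - 1)) * ζ := by linarith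
    _ ≤ μ + (ρ + ∑ i, w i * Real.exp ((Q i - μ) / ζ - 1)) * ζ := by gcongr
    _ = klDualObjective w Q ρ ζ μ := by rw [klDualObjective]; ring

/-- The partition function `t ↦ ∑ i, w i * exp (t * Q i)`, the normalising constant of the
exponential tilting of `w` along `Q`. -/
noncomputable def partitionFn (w Q : ι → ℝ) (t : ℝ) : ℝ :=
  ∑ i, w i * Real.exp (t * Q i)

/-- The probability vector obtained by tilting the weights `w` exponentially along `Q`. -/
noncomputable def expTilt (w Q : ι → ℝ) (t : ℝ) : ι → ℝ :=
  fun i => w i * Real.exp (t * Q i) / partitionFn w Q t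

/-- The expectation of `Q` under its own exponential tilting of `w`. -/
noncomputable def tiltedMean (w Q : ι → ℝ) (t : ℝ) : ℝ :=
  ∑ i, expTilt w Q t i * Q i

lemma partitionFn_zero : partitionFn w Q 0 = ∑ i, w i := by
  simp [partitionFn]

lemma continuous_partitionFn : Continuous (partitionFn w Q) := by
  unfold partitionFn
  fun_prop

variable [Nonempty ι]

lemma neg_log_sum_le_relEntropy (hp : p ∈ stdSimplex ℝ ι) (hw : ∀ i, 0 < w i) :
    -Real.log (∑ i, w i) ≤ relEntropy p w := by
  have hpos : 0 < ∑ i, w i := Finset.sum_pos (fun i _ => hw i) Finset.univ_nonempty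
  have young := sum_mul_add_sum_le_relEntropy_add_sum_mul_exp hp.1 hw
    fun _ => -Real.log (∑ i, w i)
  rw [← Finset.sum_mul, ← Finset.sum_mul, hp.2, Real.exp_neg, Real.exp_log hpos,
    mul_inv_cancel₀ hpos.ne'] at young
  linarith

lemma partitionFn_pos (hw : ∀ i, 0 < w i) (t : ℝ) : 0 < partitionFn w Q t :=
  Finset.sum_pos (fun i _ => mul_pos (hw i) (Real.exp_pos _)) Finset.univ_nonempty

lemma expTilt_mem_stdSimplex (hw : ∀ i, 0 < w i) (t : ℝ) : expTilt w Q t ∈ stdSimplex ℝ ι := by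
  refine ⟨fun i => ?_, ?_⟩
  · exact div_nonneg (mul_pos (hw i) (Real.exp_pos _)).le (partitionFn_pos hw t).le
  · simp only [expTilt, ← Finset.sum_div]
    exact div_self (partitionFn_pos hw t).ne'

lemma continuous_tiltedMean (hw : ∀ i, 0 < w i) : Continuous (tiltedMean w Q) := by
  unfold tiltedMean expTilt
  have hZ : Continuous (partitionFn w Q) := continuous_partitionFn
  fun_prop (disch := exact fun t => (partitionFn_pos hw t).ne')

lemma mul_exp_sub_log_partitionFn (hw : ∀ i, 0 < w i) (t : ℝ) (i : ι) :
    w i * Real.exp (t * Q i - Real.log (partitionFn w Q t)) = expTilt w Q t i := by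
  rw [Real.exp_sub, Real.exp_log (partitionFn_pos hw t), expTilt, mul_div_assoc]

lemma relEntropy_expTilt (hw : ∀ i, 0 < w i) (t : ℝ) :
    relEntropy (expTilt w Q t) w = t * tiltedMean w Q t - Real.log (partitionFn w Q t) := by
  have hlog (i : ι) :
      Real.log (expTilt w Q t i / w i) = t * Q i - Real.log (partitionFn w Q t) := by
    rw [← mul_exp_sub_log_partitionFn hw, mul_div_cancel_left₀ _ (hw i).ne', Real.log_exp]
  simp only [relEntropy, hlog, mul_sub, Finset.sum_sub_distrib, ← Finset.sum_mul,
    (expTilt_mem_stdSimplex hw t).2, one_mul, tiltedMean, Finset.mul_sum, mul_left_comm t]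

lemma relEntropy_expTilt_zero (hw : ∀ i, 0 < w i) :
    relEntropy (expTilt w Q 0) w = -Real.log (∑ i, w i) := by
  rw [relEntropy_expTilt hw, partitionFn_zero, zero_mul, zero_sub]

lemma continuous_relEntropy_expTilt (hw : ∀ i, 0 < w i) :
    Continuous fun t => relEntropy (expTilt w Q t) w := by
  simp only [relEntropy_expTilt hw]
  exact (continuous_id.mul (continuous_tiltedMean hw)).sub
    (continuous_partitionFn.log fun t => (partitionFn_pos hw t).ne')

/-- The value of `μ` is the stationary point of the dual objective for `ζ = t⁻¹`: there the
exponential sum equals one. -/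
lemma klDualObjective_inv_eq_tiltedMean_add (hw : ∀ i, 0 < w i) {t : ℝ} (ht : 0 < t) :
    klDualObjective w Q ρ t⁻¹ ((Real.log (partitionFn w Q t) - 1) / t) =
      tiltedMean w Q t + (ρ - relEntropy (expTilt w Q t) w) / t := by
  have hexponent (i : ι) : (Q i - (Real.log (partitionFn w Q t) - 1) / t) / t⁻¹ - 1 =
      t * Q i - Real.log (partitionFn w Q t) := by
    field_simp
    ring
  simp only [klDualObjective, hexponent, mul_exp_sub_log_partitionFn hw,
    (expTilt_mem_stdSimplex hw t).2, relEntropy_expTilt hw]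
  field_simp
  ring

lemma exists_pos_tiltedMean_add_le_tiltedMean_zero_add (hw : ∀ i, 0 < w i) {ε : ℝ} (hε : 0 < ε) :
    ∃ t > 0, tiltedMean w Q t +
      (-Real.log (∑ i, w i) - relEntropy (expTilt w Q t) w) / t ≤ tiltedMean w Q 0 + ε := by
  have hnear : ∀ᶠ t in nhdsWithin 0 (Set.Ioi 0), tiltedMean w Q t < tiltedMean w Q 0 + ε :=
    ((continuous_tiltedMean hw).continuousAt.mono_left nhdsWithin_le_nhds).eventually_lt_const
      (lt_add_of_pos_right _ hε)
  obtain ⟨t, hlt, ht : 0 < t⟩ := (hnear.and self_mem_nhdsWithin).exists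
  have hgap : (-Real.log (∑ i, w i) - relEntropy (expTilt w Q t) w) / t ≤ 0 :=
    div_nonpos_of_nonpos_of_nonneg
      (sub_nonpos.2 (neg_log_sum_le_relEntropy (expTilt_mem_stdSimplex hw t) hw)) ht.le
  exact ⟨t, ht, by linarith⟩

lemma exists_expTilt_duality_gap_le (hw : ∀ i, 0 < w i) (hρ : -Real.log (∑ i, w i) ≤ ρ)
    {ε : ℝ} (hε : 0 < ε) :
    ∃ s, relEntropy (expTilt w Q s) w ≤ ρ ∧ ∃ t > 0,
      tiltedMean w Q t + (ρ - relEntropy (expTilt w Q t) w) / t ≤ tiltedMean w Q s + ε := by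
  by_cases hreach : ∃ t > 0, ρ ≤ relEntropy (expTilt w Q t) w
  · obtain ⟨t, ht, hρt⟩ := hreach
    obtain ⟨s, ⟨hs, -⟩, rfl⟩ := intermediate_value_Icc ht.le
      (continuous_relEntropy_expTilt hw).continuousOn
      ⟨(relEntropy_expTilt_zero hw).trans_le hρ, hρt⟩
    refine ⟨s, le_rfl, ?_⟩
    rcases hs.eq_or_lt with rfl | hs
    · simpa only [relEntropy_expTilt_zero hw] using
        exists_pos_tiltedMean_add_le_tiltedMean_zero_add hw hε
    · exact ⟨s, hs, by simpa using hε.le⟩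
  · push Not at hreach
    obtain ⟨t, ht, hlarge⟩ : ∃ t > 0, ρ + Real.log (∑ i, w i) ≤ ε * t :=
      ⟨max 1 ((ρ + Real.log (∑ i, w i)) / ε), by positivity,
        (div_le_iff₀' hε).1 (le_max_right _ _)⟩
    refine ⟨t, (hreach t ht).le, t, ht, ?_⟩
    gcongr
    rw [div_le_iff₀ ht]
    linarith [neg_log_sum_le_relEntropy (expTilt_mem_stdSimplex (Q := Q) hw t) hw]

end

theorem kl_dro_dual_reformulation_general {ι : Type*} [Fintype ι] [Nonempty ι] {w : ι → ℝ}
    (hw : ∀ i, 0 < w i) (Q : ι → ℝ) {ρ : ℝ} (hρ : -Real.log (∑ i, w i) ≤ ρ) :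
    ∃ v, IsLUB {v | ∃ p : ι → ℝ, (∀ i, 0 ≤ p i) ∧ ∑ i, p i = 1 ∧ relEntropy p w ≤ ρ ∧
        v = ∑ i, p i * Q i} v ∧
      IsGLB {v | ∃ ζ μ : ℝ, 0 < ζ ∧ v = klDualObjective w Q ρ ζ μ} v := by
  apply exists_isLUB_isGLB_of_forall_exists_le_add
  · rintro _ ⟨p, hp_nonneg, hp_sum, hp_le, rfl⟩ _ ⟨ζ, μ, hζ, rfl⟩
    exact sum_mul_le_klDualObjective ⟨hp_nonneg, hp_sum⟩ hw hp_le hζ μ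
  · intro ε hε
    obtain ⟨s, hs, t, ht, hgap⟩ := exists_expTilt_duality_gap_le (Q := Q) hw hρ hε
    obtain ⟨hs_nonneg, hs_sum⟩ := expTilt_mem_stdSimplex (Q := Q) hw s
    exact ⟨_, ⟨expTilt w Q s, hs_nonneg, hs_sum, hs, rfl⟩, _, ⟨t⁻¹, _, inv_pos.2 ht, rfl⟩,
      (klDualObjective_inv_eq_tiltedMean_add hw ht).trans_le hgap⟩

/-- For every divergence tolerance ρ ≥ 0, the worst-case expected cost over
the KL ambiguity set equals the value of the paper's dual reformulation. -/
theorem kl_dro_dual_reformulation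
    (S : ℕ) (hS : 1 ≤ S) (π₀ : Fin S → ℝ)
    (hπ₀pos : ∀ ω, 0 < π₀ ω) (hπ₀sum : ∑ ω, π₀ ω = 1)
    (Q : Fin S → ℝ) (ρ : ℝ) (hρ : 0 ≤ ρ) :
    sSup {v : ℝ | ∃ π : Fin S → ℝ, (∀ ω, 0 ≤ π ω) ∧ (∑ ω, π ω = 1) ∧
        (∑ ω, π ω * Real.log (π ω / π₀ ω)) ≤ ρ ∧ v = ∑ ω, π ω * Q ω}
      = sInf {v : ℝ | ∃ ζ μ : ℝ, 0 < ζ ∧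
        v = μ + ρ * ζ + ζ * ∑ ω, π₀ ω * Real.exp ((Q ω - μ) / ζ - 1)} := by
  have : Nonempty (Fin S) := ⟨⟨0, hS⟩⟩
  obtain ⟨v, hsup, hinf⟩ := kl_dro_dual_reformulation_general hπ₀pos Q (by simpa [hπ₀sum] using hρ)
  exact (hsup.csSup_eq hsup.nonempty).trans (hinf.csInf_eq hinf.nonempty).symm
end

section
/- Validity of the Benders optimality cut: for every q ∈ ℝ, every ζ, ζ′ > 0 and every μ, μ′ ∈ ℝ, writing K′ = (q − μ′)/ζ′, one has ζ · exp((q − μ)/ζ − 1) ≥ ζ′ · exp(K′ − 1) + (1 − K′) · exp(K′ − 1) · (ζ − ζ′) − exp(K′ − 1) · (μ − μ′); that is, the first-order cut generated at (ζ′, μ′) underestimates the per-scenario dual term everywhere. -/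
/-!
The dual term is the perspective `ζ * f (ζ⁻¹ • (q - μ))` of the convex function `f K = exp (K - 1)`.
A perspective is positively homogeneous, so a tangent plane to it passes through the origin:
it is the homogenization of an affine minorant of `f`. Scaling that minorant by `ζ > 0` gives
the cut.
-/

section Perspective

variable {𝕜 E : Type*} [Field 𝕜] [AddCommGroup E] [Module 𝕜 E]

/-- The linear functional `g` is a subgradient of `f` at `a`: the affine function with slope `g`
that agrees with `f` at `a` is a global minorant of `f`. -/
def IsSubgradientAt [LE 𝕜] (f : E → 𝕜) (g : Module.Dual 𝕜 E) (a : E) : Prop :=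
  ∀ b, f a + g (b - a) ≤ f b

/-- The perspective of `f`, its homogenization by one additional variable `t`. At `t = 0` it
takes the junk value `0`. -/
def perspective (f : E → 𝕜) (t : 𝕜) (x : E) : 𝕜 :=
  t * f (t⁻¹ • x)

theorem mul_map_inv_smul (g : Module.Dual 𝕜 E) {t : 𝕜} (ht : t ≠ 0) (x : E) :
    t * g (t⁻¹ • x) = g x := by
  rw [← smul_eq_mul, ← map_smul, smul_inv_smul₀ ht]

theorem perspective_add_tangent_eq (f : E → 𝕜) (g : Module.Dual 𝕜 E) (t : 𝕜) {t₀ : 𝕜}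
    (ht₀ : t₀ ≠ 0) (x x₀ : E) :
    perspective f t₀ x₀ + (f (t₀⁻¹ • x₀) - g (t₀⁻¹ • x₀)) * (t - t₀) + g (x - x₀) =
      t * (f (t₀⁻¹ • x₀) - g (t₀⁻¹ • x₀)) + g x := by
  rw [perspective, map_sub]
  linear_combination mul_map_inv_smul g ht₀ x₀

variable [LinearOrder 𝕜] [IsStrictOrderedRing 𝕜]

theorem IsSubgradientAt.homogenization_le_perspective {f : E → 𝕜} {g : Module.Dual 𝕜 E} {a : E}
    (hg : IsSubgradientAt f g a) {t : 𝕜} (ht : 0 < t) (x : E) :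
    t * (f a - g a) + g x ≤ perspective f t x :=
  calc
    t * (f a - g a) + g x = t * (f a + g (t⁻¹ • x - a)) := by
      rw [map_sub]
      linear_combination -mul_map_inv_smul g ht.ne' x
    _ ≤ t * f (t⁻¹ • x) := mul_le_mul_of_nonneg_left (hg _) ht.le

theorem benders_cut_valid_general {f : E → 𝕜} {g : Module.Dual 𝕜 E} {ζ ζ' : 𝕜} {q μ' : E}
    (hζ : 0 < ζ) (hζ' : ζ' ≠ 0) (hg : IsSubgradientAt f g (ζ'⁻¹ • (q - μ'))) (μ : E) :
    perspective f ζ (q - μ) ≥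
      perspective f ζ' (q - μ')
        + (f (ζ'⁻¹ • (q - μ')) - g (ζ'⁻¹ • (q - μ'))) * (ζ - ζ')
        - g (μ - μ') := by
  have displacement : g (q - μ - (q - μ')) = -g (μ - μ') := by
    rw [← map_neg, sub_sub_sub_cancel_left, neg_sub]
  rw [ge_iff_le, sub_eq_add_neg, ← displacement, perspective_add_tangent_eq f g ζ hζ']
  exact hg.homogenization_le_perspective hζ (q - μ)

end Perspective

theorem isSubgradientAt_exp_sub_one (a : ℝ) :
    IsSubgradientAt (fun b : ℝ ↦ Real.exp (b - 1)) (Real.exp (a - 1) • LinearMap.id) a := by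
  intro b
  calc
    Real.exp (a - 1) + Real.exp (a - 1) * (b - a) = Real.exp (a - 1) * (b - a + 1) := by ring
    _ ≤ Real.exp (a - 1) * Real.exp (b - a) :=
      mul_le_mul_of_nonneg_left (Real.add_one_le_exp _) (Real.exp_nonneg _)
    _ = Real.exp (b - 1) := by rw [← Real.exp_add]; congr 1; ring

/-- Validity of the Benders optimality cut: the first-order cut generated
at (ζ′, μ′) underestimates the per-scenario dual term everywhere. -/
theorem benders_cut_valid (q ζ ζ' μ μ' : ℝ) (hζ : 0 < ζ) (hζ' : 0 < ζ') :
    ζ * Real.exp ((q - μ) / ζ - 1) ≥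
      ζ' * Real.exp ((q - μ') / ζ' - 1)
        + (1 - (q - μ') / ζ') * Real.exp ((q - μ') / ζ' - 1) * (ζ - ζ')
        - Real.exp ((q - μ') / ζ' - 1) * (μ - μ') := by
  have cut := benders_cut_valid_general hζ hζ'.ne'
    (isSubgradientAt_exp_sub_one (ζ'⁻¹ • (q - μ'))) μ
  simp only [perspective, LinearMap.smul_apply, LinearMap.id_apply, smul_eq_mul,
    inv_mul_eq_div] at cut
  linear_combination cut
end

section
/- The exponentially tilted (Gibbs) distribution is the worst-case distribution at its own divergence level: let ζ > 0, A = Σ_ω π°_ω · exp(Q_ω/ζ), and define π*_ω = π°_ω · exp(Q_ω/ζ) / A for each ω. Then π* ∈ Δ, and with ρ* = KL(π*‖π°), every π ∈ P(ρ*) satisfies Σ_ω π_ω Q_ω ≤ Σ_ω π*_ω Q_ω; i.e. π* attains the worst-case expected cost over P(ρ*). -/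
/-!
Relative to the reference `q`, the log-density of the tilted distribution `t ∝ q * exp f` is `f` up
to an additive constant. Hence for every `p` of total mass one
`KL(p‖q) = KL(p‖t) + ∑ p f - log Z`, where `Z` is the partition function. Subtracting the case
`p = t` gives `∑ t f - ∑ p f = KL(p‖t) + KL(t‖q) - KL(p‖q)`, which is nonnegative as soon as
`KL(p‖q) ≤ KL(t‖q)`.
-/

section

variable {ι : Type*} [Fintype ι] {p q : ι → ℝ}

/-- The Kullback–Leibler divergence `KL(p‖q)` of finite families of weights, not necessarily
normalized. The term `0 * log (0 / y) = 0` follows the usual convention, but division by zero makes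
the term of a vanishing `q i` equal to `0` instead of `∞`. -/
noncomputable def finiteKLDiv (p q : ι → ℝ) : ℝ :=
  ∑ i, p i * Real.log (p i / q i)

lemma sub_le_mul_log_div {x y : ℝ} (hx : 0 ≤ x) (hy : 0 < y) : x - y ≤ x * Real.log (x / y) := by
  have h : 0 ≤ y * InformationTheory.klFun (x / y) :=
    mul_nonneg hy.le (InformationTheory.klFun_nonneg (div_nonneg hx hy.le))
  have hexpand : y * InformationTheory.klFun (x / y) = x * Real.log (x / y) + y - x := by
    rw [InformationTheory.klFun_apply]
    field_simp
  linarith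

lemma finiteKLDiv_nonneg (hp : ∀ i, 0 ≤ p i) (hq : ∀ i, 0 < q i) (h : ∑ i, q i ≤ ∑ i, p i) :
    0 ≤ finiteKLDiv p q :=
  calc
    0 ≤ ∑ i, (p i - q i) := by rwa [Finset.sum_sub_distrib, sub_nonneg]
    _ ≤ finiteKLDiv p q := Finset.sum_le_sum fun i _ ↦ sub_le_mul_log_div (hp i) (hq i)

lemma finiteKLDiv_self (p : ι → ℝ) : finiteKLDiv p p = 0 := by
  simp [finiteKLDiv]

/-- The partition function `Z = ∑ q exp f`, the normalizing constant of the exponential tilting of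
`q` by `f`. -/
noncomputable def partitionFunction (q f : ι → ℝ) : ℝ :=
  ∑ i, q i * Real.exp (f i)

/-- The exponential tilting (Gibbs distribution) `q exp f / Z` of the weights `q` by `f`. The
temperature `ζ` is absorbed in `f`, so the tilting by costs `Q` is the case `f = Q / ζ`. -/
noncomputable def expTilted (q f : ι → ℝ) (i : ι) : ℝ :=
  q i * Real.exp (f i) / partitionFunction q f

variable [Nonempty ι]

lemma partitionFunction_pos (hq : ∀ i, 0 < q i) (f : ι → ℝ) : 0 < partitionFunction q f :=
  Finset.sum_pos (fun i _ ↦ mul_pos (hq i) (Real.exp_pos _)) Finset.univ_nonempty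

lemma expTilted_pos (hq : ∀ i, 0 < q i) (f : ι → ℝ) (i : ι) : 0 < expTilted q f i :=
  div_pos (mul_pos (hq i) (Real.exp_pos _)) (partitionFunction_pos hq f)

lemma sum_expTilted (hq : ∀ i, 0 < q i) (f : ι → ℝ) : ∑ i, expTilted q f i = 1 := by
  simp only [expTilted, ← Finset.sum_div]
  exact div_self (partitionFunction_pos hq f).ne'

lemma expTilted_mem_stdSimplex (hq : ∀ i, 0 < q i) (f : ι → ℝ) :
    expTilted q f ∈ stdSimplex ℝ ι :=
  ⟨fun i ↦ (expTilted_pos hq f i).le, sum_expTilted hq f⟩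

lemma log_expTilted (hq : ∀ i, 0 < q i) (f : ι → ℝ) (i : ι) :
    Real.log (expTilted q f i) = Real.log (q i) + f i - Real.log (partitionFunction q f) := by
  rw [expTilted, Real.log_div (mul_ne_zero (hq i).ne' (Real.exp_ne_zero _))
    (partitionFunction_pos hq f).ne', Real.log_mul (hq i).ne' (Real.exp_ne_zero _), Real.log_exp]

lemma mul_log_div_eq_mul_log_div_expTilted_add (hq : ∀ i, 0 < q i) (f : ι → ℝ) (x : ℝ) (i : ι) :
    x * Real.log (x / q i) =
      x * Real.log (x / expTilted q f i) + x * f i - x * Real.log (partitionFunction q f) := by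
  rcases eq_or_ne x 0 with rfl | hx
  · simp
  · rw [Real.log_div hx (hq i).ne', Real.log_div hx (expTilted_pos hq f i).ne', log_expTilted hq]
    ring

lemma finiteKLDiv_eq_finiteKLDiv_expTilted_add (hq : ∀ i, 0 < q i) (f p : ι → ℝ) :
    finiteKLDiv p q =
      finiteKLDiv p (expTilted q f) + ∑ i, p i * f i
        - (∑ i, p i) * Real.log (partitionFunction q f) := by
  simp only [finiteKLDiv, mul_log_div_eq_mul_log_div_expTilted_add hq f, Finset.sum_sub_distrib,
    Finset.sum_add_distrib, Finset.sum_mul]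

lemma sum_mul_le_sum_expTilted_mul (hq : ∀ i, 0 < q i) (f : ι → ℝ) (hp : p ∈ stdSimplex ℝ ι)
    (hle : finiteKLDiv p q ≤ finiteKLDiv (expTilted q f) q) :
    ∑ i, p i * f i ≤ ∑ i, expTilted q f i * f i := by
  have hp_eq := finiteKLDiv_eq_finiteKLDiv_expTilted_add hq f p
  rw [hp.2] at hp_eq
  have htilted_eq := finiteKLDiv_eq_finiteKLDiv_expTilted_add hq f (expTilted q f)
  rw [finiteKLDiv_self, sum_expTilted hq] at htilted_eq
  have hnonneg : 0 ≤ finiteKLDiv p (expTilted q f) :=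
    finiteKLDiv_nonneg hp.1 (expTilted_pos hq f) (by rw [sum_expTilted hq, hp.2])
  linarith

theorem gibbs_is_worst_case_general (hq : ∀ i, 0 < q i) (Q : ι → ℝ) {ζ : ℝ} (hζ : 0 < ζ) :
    expTilted q (fun i ↦ Q i / ζ) ∈ stdSimplex ℝ ι ∧
      ∀ p ∈ stdSimplex ℝ ι, finiteKLDiv p q ≤ finiteKLDiv (expTilted q fun i ↦ Q i / ζ) q →
        ∑ i, p i * Q i ≤ ∑ i, expTilted q (fun i ↦ Q i / ζ) i * Q i := by
  refine ⟨expTilted_mem_stdSimplex hq _, fun p hp hle ↦ ?_⟩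
  have h := sum_mul_le_sum_expTilted_mul hq _ hp hle
  simp only [← mul_div_assoc, ← Finset.sum_div] at h
  exact (div_le_div_iff_of_pos_right hζ).mp h

end

/-- The exponentially tilted (Gibbs) distribution is the worst-case
distribution at its own divergence level. -/
theorem gibbs_is_worst_case
    (S : ℕ) (hS : 1 ≤ S) (π₀ : Fin S → ℝ)
    (hπ₀pos : ∀ ω, 0 < π₀ ω) (hπ₀sum : ∑ ω, π₀ ω = 1)
    (Q : Fin S → ℝ) (ζ : ℝ) (hζ : 0 < ζ)
    (A : ℝ) (hA : A = ∑ ω, π₀ ω * Real.exp (Q ω / ζ))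
    (πstar : Fin S → ℝ) (hπstar : ∀ ω, πstar ω = π₀ ω * Real.exp (Q ω / ζ) / A)
    (ρstar : ℝ) (hρstar : ρstar = ∑ ω, πstar ω * Real.log (πstar ω / π₀ ω)) :
    ((∀ ω, 0 ≤ πstar ω) ∧ (∑ ω, πstar ω = 1)) ∧
    ∀ π : Fin S → ℝ, (∀ ω, 0 ≤ π ω) → (∑ ω, π ω = 1) →
      (∑ ω, π ω * Real.log (π ω / π₀ ω)) ≤ ρstar →
      ∑ ω, π ω * Q ω ≤ ∑ ω, πstar ω * Q ω := by
  have : Nonempty (Fin S) := ⟨⟨0, hS⟩⟩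
  obtain rfl : πstar = expTilted π₀ fun ω ↦ Q ω / ζ := funext fun ω ↦ by rw [hπstar, hA]; rfl
  have ⟨hmem, hworst⟩ := gibbs_is_worst_case_general hπ₀pos Q hζ
  exact ⟨hmem, fun π hnonneg hsum hle ↦ hworst π ⟨hnonneg, hsum⟩ (hle.trans_eq hρstar)⟩
end
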